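/- For every integer d ≥ 2, every integer r with 1 ≤ r ≤ d, and every p ∈ [0,1], the isotropic state ρ^iso_d(p) = p P_d + (1−p) I/d² on ℂ^d⊗ℂ^d has Schmidt number at most r if and only if p ≤ (r·d − 1)/(d² − 1). -/

import Mathlib

open Matrix
open scoped Kronecker ComplexOrder

/-- The Schmidt rank of a bipartite vector `ψ : m × n → ℂ`, i.e. the rank of the
matrix `C_ψ` with `(C_ψ)_{ij} = ψ (i, j)`. -/
noncomputable def schmidtRank {m n : Type*} [Fintype m] [Fintype n] (ψ : m × n → ℂ) : ℕ :=
  (Matrix.of fun i j => ψ (i, j)).rank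

/-- A matrix `ρ` indexed by `m × n` has Schmidt number at most `r` if it can be written
as `∑_k ψ_k ψ_k†` with each `ψ_k` of Schmidt rank at most `r`. -/
def SchmidtNumberLE {m n : Type*} [Fintype m] [Fintype n]
    (ρ : Matrix (m × n) (m × n) ℂ) (r : ℕ) : Prop :=
  ∃ (k : ℕ) (ψ : Fin k → m × n → ℂ),
    (∀ i, schmidtRank (ψ i) ≤ r) ∧
    ρ = ∑ i, Matrix.vecMulVec (ψ i) (star (ψ i))

/-- The Schmidt number: the least `r` such that `SchmidtNumberLE ρ r`. -/
noncomputable def schmidtNumber {m n : Type*} [Fintype m] [Fintype n]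
    (ρ : Matrix (m × n) (m × n) ℂ) : ℕ :=
  sInf {r | SchmidtNumberLE ρ r}

/-- A density matrix: positive semidefinite with unit trace. -/
def IsDensityMatrix {n : Type*} [Fintype n] (ρ : Matrix n n ℂ) : Prop :=
  ρ.PosSemidef ∧ ρ.trace = 1

/-- An effect: a Hermitian matrix `M` with `0 ≤ M ≤ I`. -/
def IsEffect {n : Type*} [Fintype n] [DecidableEq n] (M : Matrix n n ℂ) : Prop :=
  M.PosSemidef ∧ (1 - M).PosSemidef

/-- The maximally entangled unit vector `|Φ⁺_d⟩ = (1/√d) ∑ᵢ e_{(i,i)}`. -/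
noncomputable def maxEnt (d : ℕ) : Fin d × Fin d → ℂ :=
  fun p => if p.1 = p.2 then ((1 / Real.sqrt d : ℝ) : ℂ) else 0

/-- The projector `P_d = |Φ⁺_d⟩⟨Φ⁺_d|`. -/
noncomputable def projME (d : ℕ) : Matrix (Fin d × Fin d) (Fin d × Fin d) ℂ :=
  Matrix.vecMulVec (maxEnt d) (star (maxEnt d))

/-- The isotropic state `ρ^iso_d(p) = p P_d + (1−p) I/d²`. -/
noncomputable def isoState (d : ℕ) (p : ℝ) : Matrix (Fin d × Fin d) (Fin d × Fin d) ℂ :=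
  (p : ℂ) • projME d + (((1 - p) / (d ^ 2 : ℝ) : ℝ) : ℂ) • 1

/-- `|φ₂⁺⟩ = (1/√2)(e_{(0,0)} + e_{(1,1)}) ∈ ℂ⁸⊗ℂ⁸`. -/
noncomputable def phi2 : Fin 8 × Fin 8 → ℂ :=
  fun q => if q = (0, 0) ∨ q = (1, 1) then ((1 / Real.sqrt 2 : ℝ) : ℂ) else 0

/-- `ρ̃(λ) = λ ρ^iso₈(0.24) + (1−λ)|φ₂⁺⟩⟨φ₂⁺|`. -/
noncomputable def rhoTilde (l : ℝ) : Matrix (Fin 8 × Fin 8) (Fin 8 × Fin 8) ℂ :=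
  (l : ℂ) • isoState 8 0.24 + ((1 - l : ℝ) : ℂ) • Matrix.vecMulVec phi2 (star phi2)

/-!
Let `Ω = ∑ᵢ eᵢ ⊗ eᵢ`. If `ψ` has Schmidt rank at most `r`, Cauchy–Schwarz against the projection
onto the range of `C_ψ` gives `|⟨Ω, ψ⟩|² ≤ r ‖ψ‖²`; hence `⟨Ω, ρ Ω⟩ ≤ r tr ρ` whenever `ρ` has
Schmidt number at most `r`, and for the isotropic state this is the bound on `p`.

Conversely, it suffices to decompose the threshold operator `(r d - 1) |Ω⟩⟨Ω| + (d - r) I`. If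
product vectors `w₁, …, w_d` sum to `Ω`, averaging `|∑_{k ∈ T} w_k⟩⟨∑_{k ∈ T} w_k|` over the
`r`-subsets `T` shows that `(r - 1) |Ω⟩⟨Ω| + (d - r) ∑ₖ |w_k⟩⟨w_k|` has Schmidt number at most `r`.
The vectors `eᵢ ⊗ eᵢ` contribute the diagonal part `∑ᵢ |eᵢ ⊗ eᵢ⟩⟨eᵢ ⊗ eᵢ|`. Fourier bases twisted
by diagonal matrices of cube roots of unity, averaged over all the twists and given weight `d`,
contribute `|Ω⟩⟨Ω| + I` minus that diagonal part. The two operators of Schmidt number at most `r`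
obtained in this way add up to the threshold operator.
-/

section TraceRank

variable {m n 𝕜 : Type*} [Fintype m] [Fintype n] [RCLike 𝕜]

lemma exists_isStarProjection_mul_eq_self (A : Matrix m n 𝕜) :
    ∃ P : Matrix m m 𝕜, IsStarProjection P ∧ P * A = A ∧ P.trace = A.rank := by
  classical
  let b := EuclideanSpace.basisFun m 𝕜
  let c := EuclideanSpace.basisFun n 𝕜
  let f := toLin c.toBasis b.toBasis A
  let S := LinearMap.range f
  let π := S.starProjection.toLinearMap
  have isProj_π : LinearMap.IsProj S π :=
    ⟨fun x => S.starProjection_apply_mem x, fun x hx => S.starProjection_eq_self_iff.2 hx⟩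
  have isStarProjection_π : IsStarProjection π :=
    LinearMap.isStarProjection_toContinuousLinearMap_iff.1 isStarProjection_starProjection
  have π_comp_f : π ∘ₗ f = f := LinearMap.ext fun x => isProj_π.map_id _ ⟨x, rfl⟩
  refine ⟨LinearMap.toMatrixOrthonormal b π, isStarProjection_π.map _, ?_, ?_⟩
  · calc LinearMap.toMatrix b.toBasis b.toBasis π * A
        = LinearMap.toMatrix c.toBasis b.toBasis (π ∘ₗ f) := by
          rw [LinearMap.toMatrix_comp _ b.toBasis, LinearMap.toMatrix_toLin]
      _ = A := by rw [π_comp_f, LinearMap.toMatrix_toLin]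
  · calc (LinearMap.toMatrix b.toBasis b.toBasis π).trace = LinearMap.trace 𝕜 _ π :=
          (LinearMap.trace_eq_matrix_trace 𝕜 b.toBasis π).symm
      _ = Module.finrank 𝕜 S := isProj_π.trace
      _ = A.rank := by rw [A.rank_eq_finrank_range_toLin b.toBasis c.toBasis]

lemma norm_trace_conjTranspose_mul_sq_le (A B : Matrix m n 𝕜) :
    ‖(Aᴴ * B).trace‖ ^ 2 ≤ RCLike.re (Aᴴ * A).trace * RCLike.re (Bᴴ * B).trace := by
  have inner_vec (C D : Matrix m n 𝕜) :
      inner 𝕜 (WithLp.toLp 2 (vec C)) (WithLp.toLp 2 (vec D)) = (Cᴴ * D).trace := by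
    rw [EuclideanSpace.inner_toLp_toLp, dotProduct_comm, star_vec_dotProduct_vec]
  have cauchy_schwarz := inner_mul_inner_self_le (𝕜 := 𝕜) (WithLp.toLp 2 (vec A))
    (WithLp.toLp 2 (vec B))
  rwa [norm_inner_symm (WithLp.toLp 2 (vec B)), inner_vec, inner_vec, inner_vec, ← sq]
    at cauchy_schwarz

-- The projection `P` onto the range of `A` turns `tr A` into the Frobenius inner product of `P`
-- and `A`, where `‖P‖² = tr P = rank A`.
lemma norm_trace_sq_le_rank_mul (A : Matrix n n 𝕜) :
    ‖A.trace‖ ^ 2 ≤ A.rank * RCLike.re (Aᴴ * A).trace := by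
  obtain ⟨P, hP, hPA, hPtrace⟩ := exists_isStarProjection_mul_eq_self A
  have hP_adj : Pᴴ = P := hP.isSelfAdjoint
  have hP_idem : P * P = P := hP.isIdempotentElem
  simpa [hP_adj, hP_idem, hPA, hPtrace] using norm_trace_conjTranspose_mul_sq_le P A

end TraceRank

/-- The rank-one operator `|ψ⟩⟨ψ|`, the summand in the definition of `SchmidtNumberLE`. -/
abbrev ketBra {ι : Type*} (ψ : ι → ℂ) : Matrix ι ι ℂ :=
  vecMulVec ψ (star ψ)

section KetBra

variable {ι : Type*}

lemma ketBra_single [DecidableEq ι] (x : ι) :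
    ketBra (Pi.single x 1) = Matrix.single x x 1 := by
  rw [single_eq_single_vecMulVec_single, ketBra, ← Pi.single_star, star_one]

lemma ketBra_smul (c : ℂ) (ψ : ι → ℂ) :
    ketBra (c • ψ) = (‖c‖ ^ 2 : ℂ) • ketBra ψ := by
  rw [ketBra, star_smul, smul_vecMulVec, vecMulVec_smul, smul_smul, Complex.star_def,
    Complex.mul_conj']

lemma ketBra_sum {κ : Type*} (T : Finset κ) (w : κ → ι → ℂ) :
    ketBra (∑ k ∈ T, w k) = ∑ k ∈ T, ∑ l ∈ T, vecMulVec (w k) (star (w l)) := by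
  ext x y
  simp [vecMulVec_apply, Matrix.sum_apply, Finset.sum_mul_sum]

lemma star_dotProduct_ketBra_mulVec [Fintype ι] (φ ψ : ι → ℂ) :
    star φ ⬝ᵥ ketBra ψ *ᵥ φ = ‖star φ ⬝ᵥ ψ‖ ^ 2 := by
  have conj_overlap : star ψ ⬝ᵥ φ = star (star φ ⬝ᵥ ψ) := by
    rw [star_dotProduct]
  rw [vecMulVec_mulVec, op_smul_eq_smul, dotProduct_smul, smul_eq_mul, conj_overlap,
    Complex.star_def, Complex.conj_mul']

end KetBra

section MaximallyEntangledOverlap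

variable {ι : Type*} [Fintype ι] [DecidableEq ι]

lemma star_vec_one_dotProduct_vec_one :
    star (vec (1 : Matrix ι ι ℂ)) ⬝ᵥ vec 1 = Fintype.card ι := by
  rw [star_vec_dotProduct_vec, conjTranspose_one, one_mul, trace_one]

lemma norm_star_vec_one_dotProduct_sq_le (ψ : ι × ι → ℂ) :
    ‖star (vec 1) ⬝ᵥ ψ‖ ^ 2 ≤ schmidtRank ψ * (star ψ ⬝ᵥ ψ).re := by
  let C : Matrix ι ι ℂ := of fun i j => ψ (i, j)
  calc ‖star (vec 1) ⬝ᵥ vec Cᵀ‖ ^ 2 = ‖Cᵀ.trace‖ ^ 2 := by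
        rw [star_vec_dotProduct_vec, conjTranspose_one, one_mul]
    _ ≤ Cᵀ.rank * (Cᵀᴴ * Cᵀ).trace.re := norm_trace_sq_le_rank_mul Cᵀ
    _ = C.rank * (star (vec Cᵀ) ⬝ᵥ vec Cᵀ).re := by
        rw [rank_transpose, star_vec_dotProduct_vec]

lemma SchmidtNumberLE.re_vec_one_dotProduct_mulVec_le {ρ : Matrix (ι × ι) (ι × ι) ℂ} {r : ℕ}
    (hρ : SchmidtNumberLE ρ r) :
    (star (vec 1) ⬝ᵥ ρ *ᵥ vec 1).re ≤ r * ρ.trace.re := by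
  obtain ⟨k, ψ, hψ, rfl⟩ := hρ
  rw [sum_mulVec, dotProduct_sum, trace_sum, Complex.re_sum, Complex.re_sum, Finset.mul_sum]
  refine Finset.sum_le_sum fun i _ => ?_
  have norm_sq_nonneg : 0 ≤ (star (ψ i) ⬝ᵥ ψ i).re :=
    (Complex.le_def.1 (dotProduct_star_self_nonneg (ψ i))).1
  calc (star (vec 1) ⬝ᵥ ketBra (ψ i) *ᵥ vec 1).re = ‖star (vec 1) ⬝ᵥ ψ i‖ ^ 2 := by
        rw [star_dotProduct_ketBra_mulVec, ← Complex.ofReal_pow, Complex.ofReal_re]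
    _ ≤ schmidtRank (ψ i) * (star (ψ i) ⬝ᵥ ψ i).re := norm_star_vec_one_dotProduct_sq_le (ψ i)
    _ ≤ r * (star (ψ i) ⬝ᵥ ψ i).re := by gcongr; exact hψ i
    _ = r * (ketBra (ψ i)).trace.re := by rw [trace_vecMulVec, dotProduct_comm]

end MaximallyEntangledOverlap

lemma matrix_rank_add_le {m n 𝕜 : Type*} [Finite m] [Fintype n] [Field 𝕜] (A B : Matrix m n 𝕜) :
    (A + B).rank ≤ A.rank + B.rank := by
  have range_le : LinearMap.range (A + B).mulVecLin ≤
      LinearMap.range A.mulVecLin ⊔ LinearMap.range B.mulVecLin := by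
    rw [mulVecLin_add]
    exact LinearMap.range_add_le _ _
  exact (Submodule.finrank_mono range_le).trans (Submodule.finrank_add_le_finrank_add_finrank _ _)

section SchmidtRank

variable {m n : Type*} [Fintype m] [Fintype n]

lemma schmidtRank_mul_le_one (u : m → ℂ) (v : n → ℂ) :
    schmidtRank (fun x : m × n => u x.1 * v x.2) ≤ 1 :=
  rank_vecMulVec_le u v

lemma schmidtRank_single_le_one [DecidableEq m] [DecidableEq n] (x : m × n) :
    schmidtRank (Pi.single x 1) ≤ 1 := by
  have single_eq_mul : (Pi.single x 1 : m × n → ℂ) =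
      fun y => (Pi.single x.1 1 : m → ℂ) y.1 * (Pi.single x.2 1 : n → ℂ) y.2 := by
    ext y
    simp [Pi.single_apply, Prod.ext_iff, ← ite_and, and_comm]
  exact single_eq_mul ▸ schmidtRank_mul_le_one _ _

lemma schmidtRank_sum_le {κ : Type*} (T : Finset κ) (ψ : κ → m × n → ℂ) :
    schmidtRank (∑ k ∈ T, ψ k) ≤ ∑ k ∈ T, schmidtRank (ψ k) :=
  Finset.le_sum_of_subadditive schmidtRank rank_zero.le (fun _ _ => matrix_rank_add_le _ _) T ψ

lemma schmidtRank_smul_le (c : ℂ) (ψ : m × n → ℂ) : schmidtRank (c • ψ) ≤ schmidtRank ψ := by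
  classical
  let C : Matrix m n ℂ := of fun i j => ψ (i, j)
  calc (c • C).rank = ((c • (1 : Matrix m m ℂ)) * C).rank := by rw [Matrix.smul_mul, Matrix.one_mul]
    _ ≤ C.rank := rank_mul_le_right _ _

end SchmidtRank

section Cone

variable {m n : Type*} [Fintype m] [Fintype n] {r : ℕ}

lemma schmidtNumberLE_ketBra {ψ : m × n → ℂ} (hψ : schmidtRank ψ ≤ r) :
    SchmidtNumberLE (ketBra ψ) r :=
  ⟨1, fun _ => ψ, fun _ => hψ, by simp⟩

namespace SchmidtNumberLE

variable {ρ σ : Matrix (m × n) (m × n) ℂ}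

lemma zero : SchmidtNumberLE (0 : Matrix (m × n) (m × n) ℂ) r :=
  ⟨0, Fin.elim0, Fin.rec0, by simp⟩

lemma add (hρ : SchmidtNumberLE ρ r) (hσ : SchmidtNumberLE σ r) : SchmidtNumberLE (ρ + σ) r := by
  obtain ⟨k, ψ, hψ, rfl⟩ := hρ
  obtain ⟨l, φ, hφ, rfl⟩ := hσ
  refine ⟨k + l, Fin.append ψ φ, Fin.addCases (by simpa using hψ) (by simpa using hφ), ?_⟩
  simp [Fin.sum_univ_add]

lemma sum {κ : Type*} {s : Finset κ} {ρ : κ → Matrix (m × n) (m × n) ℂ}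
    (hρ : ∀ k ∈ s, SchmidtNumberLE (ρ k) r) : SchmidtNumberLE (∑ k ∈ s, ρ k) r :=
  Finset.sum_induction ρ (SchmidtNumberLE · r) (fun _ _ => add) zero hρ

lemma smul (hρ : SchmidtNumberLE ρ r) {c : ℝ} (hc : 0 ≤ c) : SchmidtNumberLE ((c : ℂ) • ρ) r := by
  obtain ⟨k, ψ, hψ, rfl⟩ := hρ
  refine ⟨k, fun i => (√c : ℂ) • ψ i, fun i => (schmidtRank_smul_le _ _).trans (hψ i), ?_⟩
  have norm_sqrt_sq : (‖(√c : ℂ)‖ : ℂ) ^ 2 = c := by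
    rw [Complex.norm_of_nonneg c.sqrt_nonneg, ← Complex.ofReal_pow, Real.sq_sqrt hc]
  simp only [Finset.smul_sum, ketBra_smul, norm_sqrt_sq]

end SchmidtNumberLE

lemma schmidtNumberLE_one [DecidableEq m] [DecidableEq n] (hr : 1 ≤ r) :
    SchmidtNumberLE (1 : Matrix (m × n) (m × n) ℂ) r := by
  rw [← sum_single_one]
  refine SchmidtNumberLE.sum fun x _ => ?_
  rw [← ketBra_single]
  exact schmidtNumberLE_ketBra ((schmidtRank_single_le_one x).trans hr)

end Cone

section SubsetAverage

variable {κ : Type*} [Fintype κ]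

lemma sum_powersetCard_sum_sum {M : Type*} [AddCommMonoid M] {n : ℕ}
    (hκ : Fintype.card κ = n + 2) (s : ℕ) (f : κ → κ → M) :
    ∑ T ∈ Finset.univ.powersetCard (s + 2), ∑ k ∈ T, ∑ l ∈ T, f k l =
      n.choose s • ∑ k, ∑ l, f k l + n.choose (s + 1) • ∑ k, f k k := by
  classical
  have card_supersets (k l : κ) :
      (Finset.univ.powersetCard (s + 2) |>.filter fun T => k ∈ T ∧ l ∈ T).card =
        n.choose s + if k = l then n.choose (s + 1) else 0 := by
    have card_containing_pair := Finset.card_filter_powersetCard_subset {k, l} Finset.univ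
      (s + 2) (Finset.subset_univ _) (Finset.card_le_two.trans (by omega))
    simp only [Finset.insert_subset_iff, Finset.singleton_subset_iff, Finset.card_univ, hκ]
      at card_containing_pair
    rw [card_containing_pair]
    split_ifs with hkl
    · simp [hkl, Nat.choose_succ_succ]
    · simp [Finset.card_pair hkl]
  calc _ = ∑ T ∈ Finset.univ.powersetCard (s + 2), ∑ k, ∑ l,
          if k ∈ T ∧ l ∈ T then f k l else 0 := by
        simp [ite_and, Finset.sum_ite_irrel]
    _ = ∑ k, ∑ l, ∑ T ∈ Finset.univ.powersetCard (s + 2),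
          if k ∈ T ∧ l ∈ T then f k l else 0 := by
        rw [Finset.sum_comm]
        exact Finset.sum_congr rfl fun k _ => Finset.sum_comm
    _ = ∑ k, ∑ l, (n.choose s + if k = l then n.choose (s + 1) else 0) • f k l := by
        simp only [← Finset.sum_filter, Finset.sum_const, card_supersets]
    _ = _ := by
        simp [add_smul, Finset.sum_add_distrib, Finset.smul_sum, ite_smul]

variable {m n : Type*} [Fintype m] [Fintype n]

-- The operator is a multiple of the sum of `|∑_{k ∈ T} w k⟩⟨∑_{k ∈ T} w k|` over `r`-subsets `T`.
lemma schmidtNumberLE_subset_average {w : κ → m × n → ℂ} (hw : ∀ k, schmidtRank (w k) ≤ 1) {r : ℕ}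
    (hr : 1 ≤ r) (hrκ : r ≤ Fintype.card κ) :
    SchmidtNumberLE (((r : ℂ) - 1) • ketBra (∑ k, w k) +
      ((Fintype.card κ : ℂ) - r) • ∑ k, ketBra (w k)) r := by
  obtain rfl | ⟨s, rfl⟩ : r = 1 ∨ ∃ s, r = s + 2 := by
    obtain rfl | hr_lt := hr.eq_or_lt
    · exact .inl rfl
    · exact .inr (Nat.exists_eq_add_of_le' hr_lt)
  · have product_sum := SchmidtNumberLE.sum (s := Finset.univ)
      fun k _ => schmidtNumberLE_ketBra (hw k)
    simpa using product_sum.smul (c := Fintype.card κ - 1) (by simpa using hrκ)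
  obtain ⟨n, hκ⟩ := Nat.exists_eq_add_of_le' ((Nat.le_add_left 2 s).trans hrκ)
  have hsn : s ≤ n := by omega
  have choose_ne_zero : (n.choose s : ℂ) ≠ 0 := by exact_mod_cast (Nat.choose_pos hsn).ne'
  have choose_succ : (n.choose (s + 1) : ℂ) * (s + 1) = n.choose s * (n - s) := by
    exact_mod_cast congrArg (Nat.cast : ℕ → ℂ) (Nat.choose_succ_right_eq n s)
  have subset_sum := SchmidtNumberLE.sum (s := Finset.univ.powersetCard (s + 2)) fun T hT =>
    schmidtNumberLE_ketBra (ψ := ∑ k ∈ T, w k) (r := s + 2) <|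
      calc schmidtRank (∑ k ∈ T, w k) ≤ ∑ k ∈ T, schmidtRank (w k) := schmidtRank_sum_le T w
        _ ≤ T.card • 1 := Finset.sum_le_card_nsmul T _ 1 fun k _ => hw k
        _ = s + 2 := by simp [(Finset.mem_powersetCard.1 hT).2]
  convert subset_sum.smul (c := (s + 1) / n.choose s) (by positivity) using 1
  simp only [ketBra_sum _ w, sum_powersetCard_sum_sum hκ, ← Nat.cast_smul_eq_nsmul ℂ, smul_add,
    smul_smul, hκ]
  congr 2
  · push_cast
    field_simp
    ring
  · push_cast
    field_simp
    linear_combination -choose_succ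

end SubsetAverage

section StandardBasis

variable {ι : Type*} [Fintype ι] [DecidableEq ι]

lemma vec_one_eq_sum_single :
    vec (1 : Matrix ι ι ℂ) = ∑ i, Pi.single (i, i) 1 := by
  ext ⟨i, j⟩
  simp [Matrix.one_apply, Pi.single_apply, ite_and, eq_comm]

lemma diagonal_vec_one_eq_sum_ketBra :
    diagonal (vec (1 : Matrix ι ι ℂ)) = ∑ i, ketBra (Pi.single (i, i) 1) := by
  simp only [ketBra_single, ← diagonal_single, vec_one_eq_sum_single]
  exact map_sum (diagonalAddMonoidHom (ι × ι) ℂ) _ _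

end StandardBasis

-- The `eᵢ` form a Sidon set: a sum of two of them determines the pair. Exponent `3` is the least
-- one that works, since `eᵢ + eᵢ = eⱼ + eⱼ` modulo `2`.
lemma single_sub_single_sub_eq_zero_iff {ι : Type*} [DecidableEq ι] (i j a b : ι) :
    (Pi.single i 1 - Pi.single j 1 - (Pi.single a 1 - Pi.single b 1) : ι → ZMod 3) = 0 ↔
      (i = a ∧ j = b) ∨ (i = j ∧ a = b) := by
  rw [sub_sub_sub_eq, sub_eq_zero,
    Pi.single_add_single_eq_single_add_single one_ne_zero one_ne_zero]
  simp [show (1 + 1 : ZMod 3) ≠ 0 by decide, or_comm, @eq_comm _ b]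

section FourierBasis

variable {ι : Type*} [DecidableEq ι] [AddCommGroup ι]

/-- The product vector `(i, j) ↦ χ(eᵢ - eⱼ) η(i - j)`, that is `v ⊗ conj v`, where `v` is the
element `η` of the Fourier basis of `ℂ^ι` with its `i`-th coordinate multiplied by the cube root of
unity `χ(eᵢ)`. The characters `χ` of `(ℤ/3)^ι` parametrize all tuples of such phases. -/
noncomputable def phasedFourier (χ : AddChar (ι → ZMod 3) ℂ) (η : AddChar ι ℂ) : ι × ι → ℂ :=
  fun x => χ (Pi.single x.1 1 - Pi.single x.2 1) * η (x.1 - x.2)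

lemma ketBra_phasedFourier_apply [Finite ι] (χ : AddChar (ι → ZMod 3) ℂ)
    (η : AddChar ι ℂ) (i j a b : ι) :
    ketBra (phasedFourier χ η) (i, j) (a, b) =
      χ (Pi.single i 1 - Pi.single j 1 - (Pi.single a 1 - Pi.single b 1)) *
        η (i - j - (a - b)) := by
  simp only [vecMulVec_apply, phasedFourier, Pi.star_apply, star_mul', Complex.star_def,
    ← AddChar.map_neg_eq_conj, sub_eq_add_neg _ (_ - _), AddChar.map_add_eq_mul]
  ring

variable [Fintype ι]

lemma schmidtRank_phasedFourier_le_one (χ : AddChar (ι → ZMod 3) ℂ) (η : AddChar ι ℂ) :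
    schmidtRank (phasedFourier χ η) ≤ 1 := by
  convert schmidtRank_mul_le_one (fun i => χ (Pi.single i 1) * η i)
    (fun j => χ (-Pi.single j 1) * η (-j)) using 2
  ext x
  simp only [phasedFourier, sub_eq_add_neg, AddChar.map_add_eq_mul]
  ring

lemma sum_phasedFourier (χ : AddChar (ι → ZMod 3) ℂ) :
    ∑ η, phasedFourier χ η = (Fintype.card ι : ℂ) • vec 1 := by
  ext ⟨i, j⟩
  simp only [phasedFourier, Finset.sum_apply, ← Finset.mul_sum, AddChar.sum_apply_eq_ite,
    sub_eq_zero, Pi.smul_apply, vec, one_apply, smul_eq_mul]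
  obtain rfl | hij := eq_or_ne i j
  · simp
  · simp [hij, hij.symm]

lemma sum_sum_ketBra_phasedFourier :
    ∑ χ : AddChar (ι → ZMod 3) ℂ, ∑ η, ketBra (phasedFourier χ η) =
      ((Fintype.card (ι → ZMod 3) : ℂ) * Fintype.card ι) •
        (ketBra (vec 1) + 1 - diagonal (vec 1)) := by
  ext ⟨i, j⟩ ⟨a, b⟩
  have mixture_apply :
      (ketBra (vec 1) + 1 - diagonal (vec 1) : Matrix (ι × ι) (ι × ι) ℂ) (i, j) (a, b) =
        if (i = a ∧ j = b) ∨ (i = j ∧ a = b) then 1 else 0 := by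
    simp only [Matrix.sub_apply, Matrix.add_apply, vecMulVec_apply, Pi.star_apply, vec, one_apply,
      diagonal_apply, Prod.mk.injEq, apply_ite star, star_one, star_zero]
    grind
  have phases_cancel (h : (i = a ∧ j = b) ∨ (i = j ∧ a = b)) : i - j - (a - b) = 0 := by
    obtain ⟨rfl, rfl⟩ | ⟨rfl, rfl⟩ := h <;> simp
  simp only [Matrix.sum_apply, ketBra_phasedFourier_apply, ← Finset.mul_sum, ← Finset.sum_mul,
    AddChar.sum_apply_eq_ite, single_sub_single_sub_eq_zero_iff,
    Matrix.smul_apply, mixture_apply]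
  split_ifs <;> simp_all

end FourierBasis

section Threshold

variable {ι : Type*} [Fintype ι] [DecidableEq ι] {r : ℕ}

lemma schmidtNumberLE_vec_one_add_diagonal (hr : 1 ≤ r) (hrι : r ≤ Fintype.card ι) :
    SchmidtNumberLE (((r : ℂ) - 1) • ketBra (vec (1 : Matrix ι ι ℂ)) +
      ((Fintype.card ι : ℂ) - r) • diagonal (vec 1)) r := by
  rw [diagonal_vec_one_eq_sum_ketBra, vec_one_eq_sum_single]
  exact schmidtNumberLE_subset_average (fun i => schmidtRank_single_le_one (i, i)) hr hrι

lemma schmidtNumberLE_vec_one_add_one_sub_diagonal (hr : 1 ≤ r) (hrι : r ≤ Fintype.card ι) :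
    SchmidtNumberLE (((r : ℂ) - 1) • (Fintype.card ι : ℂ) • ketBra (vec (1 : Matrix ι ι ℂ)) +
      ((Fintype.card ι : ℂ) - r) • (ketBra (vec 1) + 1 - diagonal (vec 1))) r := by
  have : NeZero (Fintype.card ι) := ⟨by omega⟩
  let _ : AddCommGroup ι := (Fintype.equivFin ι).addCommGroup
  have twisted_average := SchmidtNumberLE.sum (s := Finset.univ) fun χ _ =>
    schmidtNumberLE_subset_average (schmidtRank_phasedFourier_le_one (ι := ι) χ) hr
      (by rwa [AddChar.card_eq])
  convert twisted_average.smul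
    (c := 1 / (Fintype.card (ι → ZMod 3) * Fintype.card ι)) (by positivity) using 1
  have card_ne_zero : (Fintype.card ι : ℂ) ≠ 0 := NeZero.ne _
  simp only [sum_phasedFourier, ketBra_smul, Complex.norm_natCast, AddChar.card_eq,
    Finset.sum_add_distrib, ← Finset.smul_sum, sum_sum_ketBra_phasedFourier, Finset.sum_const,
    Finset.card_univ, ← Nat.cast_smul_eq_nsmul ℂ]
  push_cast
  match_scalars <;> field_simp

lemma schmidtNumberLE_vec_one_add_one (hr : 1 ≤ r) (hrι : r ≤ Fintype.card ι) :
    SchmidtNumberLE (((r * Fintype.card ι : ℂ) - 1) • ketBra (vec (1 : Matrix ι ι ℂ)) +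
      ((Fintype.card ι : ℂ) - r) • 1) r := by
  convert (schmidtNumberLE_vec_one_add_diagonal hr hrι).add
    (schmidtNumberLE_vec_one_add_one_sub_diagonal hr hrι) using 1
  module

end Threshold

section IsotropicState

variable {d r : ℕ} {p : ℝ}

lemma projME_eq_smul_ketBra (d : ℕ) : projME d = ((1 / d : ℝ) : ℂ) • ketBra (vec 1) := by
  have maxEnt_eq : maxEnt d = ((1 / √d : ℝ) : ℂ) • vec 1 := by
    ext ⟨i, j⟩
    simp [maxEnt, one_apply, eq_comm]
  have norm_sq : ‖((1 / √d : ℝ) : ℂ)‖ ^ 2 = 1 / (d : ℝ) := by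
    rw [Complex.norm_real, Real.norm_eq_abs, sq_abs, div_pow, one_pow, Real.sq_sqrt d.cast_nonneg]
  rw [projME, ← ketBra, maxEnt_eq, ketBra_smul, ← Complex.ofReal_pow, norm_sq]

lemma isoState_eq_smul_ketBra_add_smul_one (d : ℕ) (p : ℝ) :
    isoState d p = ((p / d : ℝ) : ℂ) • ketBra (vec 1) + (((1 - p) / d ^ 2 : ℝ) : ℂ) • 1 := by
  rw [isoState, projME_eq_smul_ketBra, smul_smul, ← Complex.ofReal_mul, mul_one_div]

lemma trace_isoState (hd : d ≠ 0) (p : ℝ) : (isoState d p).trace = 1 := by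
  have card_ne_zero : (d : ℂ) ≠ 0 := Nat.cast_ne_zero.2 hd
  rw [isoState_eq_smul_ketBra_add_smul_one, trace_add, trace_smul, trace_smul, trace_vecMulVec,
    dotProduct_comm, star_vec_one_dotProduct_vec_one, trace_one, Fintype.card_prod,
    Fintype.card_fin]
  push_cast
  simp only [smul_eq_mul]
  field_simp
  ring

lemma vec_one_dotProduct_isoState_mulVec (hd : d ≠ 0) (p : ℝ) :
    star (vec 1) ⬝ᵥ isoState d p *ᵥ vec 1 = ((p * d + (1 - p) / d : ℝ) : ℂ) := by
  have card_ne_zero : (d : ℂ) ≠ 0 := Nat.cast_ne_zero.2 hd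
  rw [isoState_eq_smul_ketBra_add_smul_one, add_mulVec, smul_mulVec, smul_mulVec, one_mulVec,
    dotProduct_add, dotProduct_smul, dotProduct_smul, star_dotProduct_ketBra_mulVec,
    star_vec_one_dotProduct_vec_one, Fintype.card_fin, Complex.norm_natCast]
  push_cast
  simp only [smul_eq_mul]
  field_simp

lemma le_of_schmidtNumberLE_isoState (hd : 2 ≤ d) (h : SchmidtNumberLE (isoState d p) r) :
    p ≤ (r * d - 1) / (d ^ 2 - 1) := by
  have hd0 : d ≠ 0 := by omega
  have hd2 : (2 : ℝ) ≤ d := by exact_mod_cast hd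
  have overlap_le : p * d + (1 - p) / d ≤ r := by
    have := h.re_vec_one_dotProduct_mulVec_le
    rwa [vec_one_dotProduct_isoState_mulVec hd0, trace_isoState hd0, Complex.ofReal_re,
      Complex.one_re, mul_one] at this
  rw [le_div_iff₀ (by nlinarith)]
  calc p * (d ^ 2 - 1) = (p * d + (1 - p) / d) * d - 1 := by field_simp; ring
    _ ≤ r * d - 1 := by gcongr

lemma schmidtNumberLE_isoState_of_le (hd : 2 ≤ d) (hr1 : 1 ≤ r) (hr2 : r ≤ d) (hp0 : 0 ≤ p)
    (hp : p ≤ (r * d - 1) / (d ^ 2 - 1)) : SchmidtNumberLE (isoState d p) r := by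
  have hd2 : (2 : ℝ) ≤ d := by exact_mod_cast hd
  have one_le_r : (1 : ℝ) ≤ r := by exact_mod_cast hr1
  have threshold_pos : 0 < (r * d - 1 : ℝ) := by nlinarith
  have mul_le_threshold : p * (d ^ 2 - 1) ≤ r * d - 1 := (le_div_iff₀ (by nlinarith)).1 hp
  have noise_nonneg : 0 ≤ (r * d - 1 - p * (d ^ 2 - 1)) / (d ^ 2 * (r * d - 1)) :=
    div_nonneg (sub_nonneg.2 mul_le_threshold) (by positivity)
  have threshold := schmidtNumberLE_vec_one_add_one (ι := Fin d) hr1 (by simpa using hr2)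
  convert (threshold.smul (c := p / (d * (r * d - 1))) (by positivity)).add
    ((schmidtNumberLE_one hr1).smul noise_nonneg) using 1
  have threshold_ne_zero : (d * r - 1 : ℝ) ≠ 0 := mul_comm (r : ℝ) d ▸ threshold_pos.ne'
  have entangled_coeff : p / d = p / (d * (r * d - 1)) * (r * d - 1) := by field_simp
  have noise_coeff : (1 - p) / d ^ 2 = p / (d * (r * d - 1)) * (d - r) +
      (r * d - 1 - p * (d ^ 2 - 1)) / (d ^ 2 * (r * d - 1)) := by field_simp; ring
  rw [isoState_eq_smul_ketBra_add_smul_one, entangled_coeff, noise_coeff, Fintype.card_fin]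
  push_cast
  module

end IsotropicState

/-- the isotropic state `ρ^iso_d(p)` has Schmidt number at most `r`
if and only if `p ≤ (r d − 1)/(d² − 1)`. -/
theorem isotropic_schmidt_number_le_iff (d r : ℕ) (hd : 2 ≤ d) (hr1 : 1 ≤ r) (hr2 : r ≤ d)
    (p : ℝ) (hp0 : 0 ≤ p) (hp1 : p ≤ 1) :
    SchmidtNumberLE (isoState d p) r ↔
      p ≤ ((r : ℝ) * (d : ℝ) - 1) / ((d : ℝ) ^ 2 - 1) := by
  exact ⟨le_of_schmidtNumberLE_isoState hd, schmidtNumberLE_isoState_of_le hd hr1 hr2 hp0⟩
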